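/- Let μ be a probability measure on ℝ and p* : ℝ → [0,1] a measurable function giving the probability that the initial choice is 0 given α. In the binary AR(1) logit model, define the one-period average marginal effect AME^{(1)} = ∫ (Λ(α+β) − Λ(α)) dμ(α), and let P_{0,1,0} and P_{1,0,1} be the probabilities of the three-period choice histories (0,1,0) and (1,0,1). Then: AME^{(1)} = (e^β − 1) · (P_{0,1,0} + P_{1,0,1}). (Corollary 1.1, equation (36).) -/

import Mathlib

open MeasureTheory

/-- The logistic function `Λ(u) = e^u / (1 + e^u)`. -/
noncomputable def logistic (u : ℝ) : ℝ := Real.exp u / (1 + Real.exp u)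

theorem logistic_nonneg (u : ℝ) : 0 ≤ logistic u := by
  unfold logistic
  positivity

theorem logistic_le_one (u : ℝ) : logistic u ≤ 1 := by
  unfold logistic
  exact div_le_one_of_le₀ (by linarith) (by positivity)

theorem measurable_logistic : Measurable logistic := by
  unfold logistic
  fun_prop

theorem logistic_add_sub_logistic (α β : ℝ) :
    logistic (α + β) - logistic α
      = (Real.exp β - 1) * (logistic α * (1 - logistic (α + β))) := by
  have hα : 1 + Real.exp α ≠ 0 := by positivity
  have hαβ : 1 + Real.exp α * Real.exp β ≠ 0 := by positivity
  simp only [logistic, Real.exp_add]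
  field_simp
  ring

/-- The probability that a unit with fixed effect `α` switches into and out of state `1`, weighted
by a measurable function `w` with values in `[0, 1]`, is integrable. -/
theorem integrable_mul_logistic_mul (β : ℝ) (μ : Measure ℝ) [IsFiniteMeasure μ]
    {w : ℝ → ℝ} (hw : Measurable w) (hw0 : ∀ α, 0 ≤ w α) (hw1 : ∀ α, w α ≤ 1) :
    Integrable (fun α => w α * logistic α * (1 - logistic (α + β))) μ := by
  have hm := measurable_logistic
  refine Integrable.of_bound (C := 1) (by fun_prop) (ae_of_all _ fun α => ?_)
  have h1 : 0 ≤ 1 - logistic (α + β) := sub_nonneg.2 (logistic_le_one _)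
  have h2 : 0 ≤ w α * logistic α := mul_nonneg (hw0 α) (logistic_nonneg α)
  rw [Real.norm_of_nonneg (mul_nonneg h2 h1)]
  exact mul_le_one₀ (mul_le_one₀ (hw1 α) (logistic_nonneg α) (logistic_le_one α)) h1
    (by linarith [logistic_nonneg (α + β)])

/-- Corollary 1.1, equation (36): in the binary AR(1) logit model, the
one-period average marginal effect `AME⁽¹⁾ = ∫ (Λ(α+β) − Λ(α)) dμ(α)`
satisfies `AME⁽¹⁾ = (e^β − 1) · (P_{0,1,0} + P_{1,0,1})`, where
`P_{0,1,0} = ∫ p*(α) · Λ(α) · (1 − Λ(α+β)) dμ(α)` and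
`P_{1,0,1} = ∫ (1 − p*(α)) · (1 − Λ(α+β)) · Λ(α) dμ(α)`. -/
theorem cor11_eq36 (β : ℝ) (μ : Measure ℝ) [IsProbabilityMeasure μ]
    (pstar : ℝ → ℝ) (hmeas : Measurable pstar)
    (h0 : ∀ α, 0 ≤ pstar α) (h1 : ∀ α, pstar α ≤ 1) :
    (∫ α, (logistic (α + β) - logistic α) ∂μ)
      = (Real.exp β - 1)
        * ((∫ α, pstar α * logistic α * (1 - logistic (α + β)) ∂μ)
            + ∫ α, (1 - pstar α) * (1 - logistic (α + β)) * logistic α ∂μ) := by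
  simp only [mul_right_comm (1 - pstar _)]
  rw [← integral_add (integrable_mul_logistic_mul β μ hmeas h0 h1)
    (integrable_mul_logistic_mul β μ (w := fun α => 1 - pstar α) (by fun_prop)
      (fun α => sub_nonneg.2 (h1 α)) fun α => by linarith [h0 α]), ← integral_const_mul]
  refine integral_congr_ae (ae_of_all _ fun α => ?_)
  simp only [logistic_add_sub_logistic]
  ring
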